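/- arXiv:2312.04733 — 5 statements merged into one kernel-verified Lean document; each statement's English description precedes it below -/
import Mathlib

section
/- Let u : ℝ^q → ℝ^p be twice continuously differentiable on the closed segment joining ᾱ to ᾱ + δα, with the operator norm of its second derivative bounded by M > 0 on that segment. Let ε > 0 and let N be a positive integer with N ≥ M‖δα‖²/(2ε). Then the per-step increment δα/N and per-step tolerance ε/N satisfy the admissibility condition of the single-step bound, namely ‖δα/N‖ ≤ √(2(ε/N)/M); consequently at each homotopy step the first-order update ‖u(β) + Du(β)(δα/N) − u(β + δα/N)‖ ≤ ε/N for every β on the segment joining ᾱ to ᾱ + (N−1)δα/N, and the accumulated per-step errors total at most ε. -/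
/-!
If the derivative of `u` is `M`-Lipschitz along `[x, y]`, then the derivative of
`t ↦ u (x + t (y - x)) - t u' x (y - x)` has norm at most `M ‖y - x‖² t`, so integration over
`[0, 1]` bounds the first-order error by `M ‖y - x‖² / 2`. Dividing `δα` into `N` steps divides
this bound by `N²`, while the tolerance is only divided by `N`; the remaining factor `N` absorbs
`M ‖δα‖² / (2 ε)`.
-/

section Convexity

variable {𝕜 V : Type*} [Ring 𝕜] [PartialOrder 𝕜] [IsOrderedRing 𝕜] [AddCommGroup V] [Module 𝕜 V]

theorem segment_add_smul_subset_of_convex {S : Set V} (hS : Convex 𝕜 S) {x v y : V} {s : 𝕜}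
    (hx : x ∈ S) (hxv : x + v ∈ S) (hs₀ : 0 ≤ s) (hs₁ : s ≤ 1)
    (hy : y ∈ segment 𝕜 x (x + (1 - s) • v)) : segment 𝕜 y (y + s • v) ⊆ S := by
  have hyS : y ∈ S :=
    hS.segment_subset hx (hS.add_smul_mem hx hxv ⟨sub_nonneg.2 hs₁, sub_le_self 1 hs₀⟩) hy
  have hshift : y + s • v ∈ segment 𝕜 (x + s • v) (x + v) := by
    have htranslate := (mem_segment_translate 𝕜 (s • v)).2 hy
    have hend : s • v + (x + (1 - s) • v) = x + v := by rw [sub_smul, one_smul]; abel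
    rwa [hend, add_comm _ y, add_comm _ x] at htranslate
  exact hS.segment_subset hyS (hS.segment_subset (hS.add_smul_mem hx hxv ⟨hs₀, hs₁⟩) hxv hshift)

end Convexity

section FirstOrderError

open Set

variable {E F : Type*} [NormedAddCommGroup E] [NormedSpace ℝ E]
  [NormedAddCommGroup F] [NormedSpace ℝ F]

theorem norm_image_sub_le_sq_of_norm_deriv_le_linear {f f' : ℝ → F} {a b C : ℝ} (hab : a ≤ b)
    (hf : ∀ t ∈ Icc a b, HasDerivWithinAt f (f' t) (Icc a b) t)
    (hf' : ∀ t ∈ Ico a b, ‖f' t‖ ≤ C * (t - a)) :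
    ‖f b - f a‖ ≤ C / 2 * (b - a) ^ 2 := by
  have hquadratic (t : ℝ) : HasDerivAt (fun t ↦ C / 2 * (t - a) ^ 2) (C * (t - a)) t :=
    ((((hasDerivAt_id' t).sub_const a).pow 2).const_mul (C / 2)).congr_deriv (by push_cast; ring)
  have hright (t : ℝ) (ht : t ∈ Ico a b) :
      HasDerivWithinAt (fun t ↦ f t - f a) (f' t) (Ici t) t :=
    ((hf t (Ico_subset_Icc_self ht)).mono_of_mem_nhdsWithin
      (Icc_mem_nhdsGE_of_mem ht)).sub_const (f a)
  exact image_norm_le_of_norm_deriv_right_le_deriv_boundary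
    (fun t ht ↦ ((hf t ht).sub_const (f a)).continuousWithinAt) hright (by simp) hquadratic hf'
    (right_mem_Icc.2 hab)

theorem norm_add_fderiv_sub_le {u : E → F} {u' : E → E →L[ℝ] F} {x y : E} {M : ℝ}
    (hu : ∀ z ∈ segment ℝ x y, HasFDerivWithinAt u (u' z) (segment ℝ x y) z)
    (hu' : ∀ z ∈ segment ℝ x y, ‖u' z - u' x‖ ≤ M * ‖z - x‖) :
    ‖u x + u' x (y - x) - u y‖ ≤ M * ‖y - x‖ ^ 2 / 2 := by
  let γ : ℝ → E := AffineMap.lineMap x y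
  let g : ℝ → F := fun t ↦ u (γ t) - t • u' x (y - x)
  have hγ : MapsTo γ (Icc 0 1) (segment ℝ x y) := fun t ht ↦
    segment_eq_image_lineMap ℝ x y ▸ mem_image_of_mem _ ht
  have hderiv (t : ℝ) (ht : t ∈ Icc (0 : ℝ) 1) :
      HasDerivWithinAt g ((u' (γ t) - u' x) (y - x)) (Icc 0 1) t := by
    have hlinear : HasDerivWithinAt (fun t : ℝ ↦ t • u' x (y - x)) (u' x (y - x)) (Icc 0 1) t := by
      simpa using (hasDerivWithinAt_id t (Icc 0 1)).smul_const (u' x (y - x))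
    exact ((hu _ (hγ ht)).comp_hasDerivWithinAt t AffineMap.hasDerivWithinAt_lineMap hγ).sub hlinear
  have hbound (t : ℝ) (ht : t ∈ Ico (0 : ℝ) 1) :
      ‖(u' (γ t) - u' x) (y - x)‖ ≤ M * ‖y - x‖ ^ 2 * (t - 0) := by
    have hdist : ‖γ t - x‖ = t * ‖y - x‖ := by
      simp [γ, AffineMap.lineMap_apply, norm_smul, abs_of_nonneg ht.1]
    calc ‖(u' (γ t) - u' x) (y - x)‖ ≤ ‖u' (γ t) - u' x‖ * ‖y - x‖ :=
          ContinuousLinearMap.le_opNorm _ _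
      _ ≤ M * ‖γ t - x‖ * ‖y - x‖ := by gcongr; exact hu' _ (hγ (Ico_subset_Icc_self ht))
      _ = M * ‖y - x‖ ^ 2 * (t - 0) := by rw [hdist]; ring
  have herror : u x + u' x (y - x) - u y = -(g 1 - g 0) := by
    simp only [g, γ, AffineMap.lineMap_apply_one, AffineMap.lineMap_apply_zero, one_smul, zero_smul]
    abel
  calc ‖u x + u' x (y - x) - u y‖ = ‖g 1 - g 0‖ := by rw [herror, norm_neg]
    _ ≤ M * ‖y - x‖ ^ 2 / 2 * (1 - 0) ^ 2 :=
        norm_image_sub_le_sq_of_norm_deriv_le_linear zero_le_one hderiv hbound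
    _ = M * ‖y - x‖ ^ 2 / 2 := by ring

theorem norm_add_fderiv_sub_le_of_norm_sub_le_sqrt {u : E → F} {u' : E → E →L[ℝ] F} {x y : E}
    {M ε : ℝ} (hM : 0 < M) (hε : 0 ≤ ε)
    (hu : ∀ z ∈ segment ℝ x y, HasFDerivWithinAt u (u' z) (segment ℝ x y) z)
    (hu' : ∀ z ∈ segment ℝ x y, ‖u' z - u' x‖ ≤ M * ‖z - x‖)
    (hxy : ‖y - x‖ ≤ √(2 * ε / M)) :
    ‖u x + u' x (y - x) - u y‖ ≤ ε := by
  have hsq : ‖y - x‖ ^ 2 ≤ 2 * ε / M := (Real.le_sqrt (norm_nonneg _) (by positivity)).1 hxy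
  calc ‖u x + u' x (y - x) - u y‖ ≤ M * ‖y - x‖ ^ 2 / 2 := norm_add_fderiv_sub_le hu hu'
    _ ≤ M * (2 * ε / M) / 2 := by gcongr
    _ = ε := by field_simp

theorem norm_inv_smul_le_sqrt {v : E} {M ε r : ℝ} (hM : 0 < M) (hε : 0 < ε) (hr : 0 < r)
    (hv : M * ‖v‖ ^ 2 / (2 * ε) ≤ r) : ‖r⁻¹ • v‖ ≤ √(2 * (ε / r) / M) := by
  have hsq : ‖v‖ ^ 2 ≤ r * (2 * ε) / M := by
    rwa [le_div_iff₀' hM, ← div_le_iff₀ (by positivity)]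
  apply Real.le_sqrt_of_sq_le
  calc ‖r⁻¹ • v‖ ^ 2 = r⁻¹ ^ 2 * ‖v‖ ^ 2 := by
        rw [norm_smul, mul_pow, Real.norm_of_nonneg (by positivity)]
    _ ≤ r⁻¹ ^ 2 * (r * (2 * ε) / M) := by gcongr
    _ = 2 * (ε / r) / M := by field_simp

theorem stmt_1_general {u : E → F} {u' : E → E →L[ℝ] F} {α₀ δα : E} {M ε : ℝ} {N : ℕ}
    (hM : 0 < M) (hε : 0 < ε) (hN : 0 < N)
    (hu : ∀ x ∈ segment ℝ α₀ (α₀ + δα),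
      HasFDerivWithinAt u (u' x) (segment ℝ α₀ (α₀ + δα)) x)
    (hu' : ∀ x ∈ segment ℝ α₀ (α₀ + δα), ∀ y ∈ segment ℝ α₀ (α₀ + δα),
      ‖u' y - u' x‖ ≤ M * ‖y - x‖)
    (hNbig : M * ‖δα‖ ^ 2 / (2 * ε) ≤ (N : ℝ)) :
    ‖(N : ℝ)⁻¹ • δα‖ ≤ √(2 * (ε / N) / M) ∧
    (∀ β ∈ segment ℝ α₀ (α₀ + (((N : ℝ) - 1) / N) • δα),
      ‖u β + u' β ((N : ℝ)⁻¹ • δα) - u (β + (N : ℝ)⁻¹ • δα)‖ ≤ ε / N) ∧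
    (N : ℝ) * (ε / N) ≤ ε := by
  have hN₀ : (0 : ℝ) < N := Nat.cast_pos.2 hN
  have hadmissible := norm_inv_smul_le_sqrt hM hε hN₀ hNbig
  refine ⟨hadmissible, fun β hβ ↦ ?_, (mul_div_cancel₀ ε hN₀.ne').le⟩
  have hfraction : ((N : ℝ) - 1) / N = 1 - (N : ℝ)⁻¹ := by field_simp
  rw [hfraction] at hβ
  have hsubset : segment ℝ β (β + (N : ℝ)⁻¹ • δα) ⊆ segment ℝ α₀ (α₀ + δα) :=
    segment_add_smul_subset_of_convex (convex_segment _ _) (left_mem_segment ℝ _ _)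
      (right_mem_segment ℝ _ _) (by positivity) (Nat.cast_inv_le_one N) hβ
  have hβS := hsubset (left_mem_segment ℝ _ _)
  simpa only [add_sub_cancel_left] using
    norm_add_fderiv_sub_le_of_norm_sub_le_sqrt hM (by positivity)
      (fun z hz ↦ (hu z (hsubset hz)).mono hsubset) (fun z hz ↦ hu' β hβS z (hsubset hz))
      (by rwa [add_sub_cancel_left])

end FirstOrderError

/-- homotopic step-count bound (paper's Corollary).
If the second derivative of `u` has operator norm at most `M > 0` on the segment from
`α₀` to `α₀ + δα` and `N ≥ M‖δα‖²/(2ε)` is a positive integer, then the per-step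
increment `δα/N` and tolerance `ε/N` satisfy the single-step admissibility condition
`‖δα/N‖ ≤ √(2(ε/N)/M)`; consequently the first-order update at each homotopy step has
error at most `ε/N` for every base point `β` on the segment from `α₀` to
`α₀ + (N−1)δα/N`, and the accumulated per-step errors total at most `ε`. -/
theorem stmt_1 {q p : ℕ}
    (u : EuclideanSpace ℝ (Fin q) → EuclideanSpace ℝ (Fin p))
    (u' : EuclideanSpace ℝ (Fin q) →
      (EuclideanSpace ℝ (Fin q) →L[ℝ] EuclideanSpace ℝ (Fin p)))
    (u'' : EuclideanSpace ℝ (Fin q) →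
      (EuclideanSpace ℝ (Fin q) →L[ℝ]
        (EuclideanSpace ℝ (Fin q) →L[ℝ] EuclideanSpace ℝ (Fin p))))
    (α₀ δα : EuclideanSpace ℝ (Fin q)) (M ε : ℝ) (N : ℕ)
    (hM : 0 < M) (hε : 0 < ε) (hN : 0 < N)
    (hd1 : ∀ x ∈ segment ℝ α₀ (α₀ + δα),
      HasFDerivWithinAt u (u' x) (segment ℝ α₀ (α₀ + δα)) x)
    (hd2 : ∀ x ∈ segment ℝ α₀ (α₀ + δα),
      HasFDerivWithinAt u' (u'' x) (segment ℝ α₀ (α₀ + δα)) x)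
    (hcont : ContinuousOn u'' (segment ℝ α₀ (α₀ + δα)))
    (hbound : ∀ x ∈ segment ℝ α₀ (α₀ + δα), ‖u'' x‖ ≤ M)
    (hNbig : M * ‖δα‖ ^ 2 / (2 * ε) ≤ (N : ℝ)) :
    ‖((N : ℝ)⁻¹ • δα)‖ ≤ Real.sqrt (2 * (ε / N) / M) ∧
    (∀ β ∈ segment ℝ α₀ (α₀ + (((N : ℝ) - 1) / N) • δα),
      ‖u β + u' β ((N : ℝ)⁻¹ • δα) - u (β + (N : ℝ)⁻¹ • δα)‖ ≤ ε / N) ∧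
    (N : ℝ) * (ε / N) ≤ ε :=
  stmt_1_general hM hε hN hd1 (fun _ hx _ hy ↦
    (convex_segment _ _).norm_image_sub_le_of_norm_hasFDerivWithin_le hd2 hbound hx hy) hNbig
end

section
/- Let S be an n×n real symmetric positive semidefinite matrix and let f, p_i, p_j, q_i, q_j ∈ ℝⁿ be vectors and m ∈ ℝ. If q_jᵀ(f − (1/2)·S·p_j) = −(1/4)·p_jᵀSp_j − m and q_iᵀ(f − (1/2)·S·p_i) = −(1/4)·p_iᵀSp_i − m, then (q_j − q_i)ᵀ(f − (1/2)·S·p_i) = (1/2)·(q_j − p_i)ᵀS(p_j − p_i) − (1/4)·(p_j − p_i)ᵀS(p_j − p_i). -/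
open Matrix

/-!
Replacing the policy gradient `p_j` by `p_i` in the closed-loop drift of the first update equation
costs the cross term `½ q_jᵀS(p_j − p_i)`, and subtracting the second update equation then leaves
`½ q_jᵀS(p_j − p_i) − ¼(p_jᵀSp_j − p_iᵀSp_i)`. Expanding the quadratic form `p ↦ pᵀSp` about `p_i`
gives the claim.
-/

section

variable {ι R : Type*} [Fintype ι] [CommRing R]

lemma dotProduct_sub_smul_mulVec_eq_add {κ : Type*} [Fintype κ] (S : Matrix κ ι R) (a : R)
    (f q : κ → R) (p p' : ι → R) :
    q ⬝ᵥ (f - a • (S *ᵥ p)) = q ⬝ᵥ (f - a • (S *ᵥ p')) + a * (q ⬝ᵥ (S *ᵥ (p' - p))) := by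
  simp only [dotProduct_sub, dotProduct_smul, mulVec_sub, smul_eq_mul]
  ring

lemma dotProduct_mulVec_self_sub_of_isSymm {S : Matrix ι ι R} (hS : S.IsSymm) (u v : ι → R) :
    u ⬝ᵥ (S *ᵥ u) - v ⬝ᵥ (S *ᵥ v) =
      2 * (v ⬝ᵥ (S *ᵥ (u - v))) + (u - v) ⬝ᵥ (S *ᵥ (u - v)) := by
  have cross_comm : u ⬝ᵥ (S *ᵥ v) = v ⬝ᵥ (S *ᵥ u) := by
    simpa only [hS.eq] using dotProduct_transpose_mulVec S u v
  simp only [mulVec_sub, dotProduct_sub, sub_dotProduct, cross_comm]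
  ring

theorem stmt_3_general {S : Matrix ι ι R} (hS : S.IsSymm) (c : R)
    (f pi pj qi qj : ι → R) (m : R)
    (hj : qj ⬝ᵥ (f - (2 * c) • (S *ᵥ pj)) = -c * (pj ⬝ᵥ (S *ᵥ pj)) - m)
    (hi : qi ⬝ᵥ (f - (2 * c) • (S *ᵥ pi)) = -c * (pi ⬝ᵥ (S *ᵥ pi)) - m) :
    (qj - qi) ⬝ᵥ (f - (2 * c) • (S *ᵥ pi)) =
      2 * c * ((qj - pi) ⬝ᵥ (S *ᵥ (pj - pi))) - c * ((pj - pi) ⬝ᵥ (S *ᵥ (pj - pi))) := by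
  calc (qj - qi) ⬝ᵥ (f - (2 * c) • (S *ᵥ pi))
    _ = 2 * c * (qj ⬝ᵥ (S *ᵥ (pj - pi))) - c * (pj ⬝ᵥ (S *ᵥ pj) - pi ⬝ᵥ (S *ᵥ pi)) := by
      rw [sub_dotProduct, hi, dotProduct_sub_smul_mulVec_eq_add S (2 * c) f qj pi pj, hj]
      ring
    _ = 2 * c * ((qj - pi) ⬝ᵥ (S *ᵥ (pj - pi))) - c * ((pj - pi) ⬝ᵥ (S *ᵥ (pj - pi))) := by
      rw [dotProduct_mulVec_self_sub_of_isSymm hS, sub_dotProduct qj pi]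
      ring

end

/-- pointwise cross-term identity comparing two policy-iteration updates
(paper's Theorem 1). If `q_jᵀ(f − ½Sp_j) = −¼p_jᵀSp_j − m` and
`q_iᵀ(f − ½Sp_i) = −¼p_iᵀSp_i − m` for a symmetric positive semidefinite `S`, then
`(q_j − q_i)ᵀ(f − ½Sp_i) = ½(q_j − p_i)ᵀS(p_j − p_i) − ¼(p_j − p_i)ᵀS(p_j − p_i)`. -/
theorem stmt_3 {n : ℕ} (S : Matrix (Fin n) (Fin n) ℝ) (hS : S.PosSemidef)
    (f pi pj qi qj : Fin n → ℝ) (m : ℝ)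
    (hj : qj ⬝ᵥ (f - (1 / 2 : ℝ) • (S *ᵥ pj)) = -(1 / 4) * (pj ⬝ᵥ (S *ᵥ pj)) - m)
    (hi : qi ⬝ᵥ (f - (1 / 2 : ℝ) • (S *ᵥ pi)) = -(1 / 4) * (pi ⬝ᵥ (S *ᵥ pi)) - m) :
    (qj - qi) ⬝ᵥ (f - (1 / 2 : ℝ) • (S *ᵥ pi)) =
      (1 / 2) * ((qj - pi) ⬝ᵥ (S *ᵥ (pj - pi)))
        - (1 / 4) * ((pj - pi) ⬝ᵥ (S *ᵥ (pj - pi))) := by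
  rw [show (1 / 2 : ℝ) = 2 * (1 / 4) by norm_num] at hj hi ⊢
  exact stmt_3_general (isHermitian_iff_isSymm.mp hS.isHermitian) (1 / 4) f pi pj qi qj m hj hi
end

section
/- Let S be an n×n real symmetric positive semidefinite matrix and let f, p, q, r ∈ ℝⁿ be vectors and m ∈ ℝ. If qᵀ(f − (1/2)·S·p) = −(1/4)·pᵀSp − m and rᵀ(f − (1/2)·S·q) = −(1/4)·qᵀSq − m, then (q − r)ᵀ(f − (1/2)·S·q) = −(1/4)·(q − p)ᵀS(q − p). In particular, since S is positive semidefinite, (q − r)ᵀ(f − (1/2)·S·q) ≤ 0. -/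
open Matrix

/-!
Write `H(p, q) = qᵀ(f - ½Sp) + ¼pᵀSp + m`, so that the two update equations say `H(p, q) = 0` and
`H(q, r) = 0`. Since `H` is affine in its second argument, `(q - r)ᵀ(f - ½Sq) = H(q, q) - H(q, r)`,
and this equals `H(q, q) - H(p, q)` because both subtracted terms vanish. Completing the square in
the first argument gives `H(p, q) - H(q, q) = ¼(q - p)ᵀS(q - p)`: for the costate `q` the greedy
control is the one that minimizes the Hamiltonian.
-/

section SymmetricForm

variable {ι R : Type*} [Fintype ι] [CommRing R] {S : Matrix ι ι R}

theorem dotProduct_mulVec_comm_of_isSymm (hS : S.IsSymm) (x y : ι → R) :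
    x ⬝ᵥ (S *ᵥ y) = y ⬝ᵥ (S *ᵥ x) := by
  simpa only [hS.eq] using dotProduct_transpose_mulVec S x y

theorem sub_dotProduct_mulVec_sub_of_isSymm (hS : S.IsSymm) (x y : ι → R) :
    (x - y) ⬝ᵥ (S *ᵥ (x - y)) =
      x ⬝ᵥ (S *ᵥ x) - 2 * (x ⬝ᵥ (S *ᵥ y)) + y ⬝ᵥ (S *ᵥ y) := by
  rw [mulVec_sub, sub_dotProduct, dotProduct_sub, dotProduct_sub,
    dotProduct_mulVec_comm_of_isSymm hS y x]
  ring

end SymmetricForm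

section Hamiltonian

variable {ι K : Type*} [Fintype ι] [Field K]

/-- The Hamiltonian, at a fixed state, of the control-affine system `ẋ = f + g u` with running cost
`m + uᵀRu`, evaluated at the costate `q` and at the control `u = -½R⁻¹gᵀp` that is greedy for the
costate `p`. The matrix `S` stands for `g R⁻¹ gᵀ`, so that `g u = -½Sp` and `uᵀRu = ¼pᵀSp`. -/
def policyHamiltonian (S : Matrix ι ι K) (f : ι → K) (m : K) (p q : ι → K) : K :=
  q ⬝ᵥ (f - (1 / 2 : K) • (S *ᵥ p)) + 1 / 4 * (p ⬝ᵥ (S *ᵥ p)) + m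

variable {S : Matrix ι ι K} {f p q r : ι → K} {m : K}

theorem policyHamiltonian_eq_zero_iff :
    policyHamiltonian S f m p q = 0 ↔
      q ⬝ᵥ (f - (1 / 2 : K) • (S *ᵥ p)) = -(1 / 4) * (p ⬝ᵥ (S *ᵥ p)) - m := by
  rw [policyHamiltonian, add_assoc, add_eq_zero_iff_eq_neg, neg_add', neg_mul]

theorem policyHamiltonian_sub_right (S : Matrix ι ι K) (f : ι → K) (m : K) (p q r : ι → K) :
    policyHamiltonian S f m p q - policyHamiltonian S f m p r =
      (q - r) ⬝ᵥ (f - (1 / 2 : K) • (S *ᵥ p)) := by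
  rw [policyHamiltonian, policyHamiltonian, sub_dotProduct]
  ring

theorem policyHamiltonian_sub_self [NeZero (2 : K)] (hS : S.IsSymm) (f : ι → K) (m : K)
    (p q : ι → K) :
    policyHamiltonian S f m p q - policyHamiltonian S f m q q =
      1 / 4 * ((q - p) ⬝ᵥ (S *ᵥ (q - p))) := by
  have half_eq : (1 / 2 : K) = 1 / 4 * 2 := by
    rw [show (4 : K) = 2 * 2 by norm_num]
    field_simp
  rw [sub_dotProduct_mulVec_sub_of_isSymm hS, policyHamiltonian, policyHamiltonian, half_eq]
  simp only [dotProduct_sub, dotProduct_smul, smul_eq_mul]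
  ring

theorem sub_dotProduct_eq_of_policyHamiltonian_eq_zero [NeZero (2 : K)] (hS : S.IsSymm)
    (hpq : policyHamiltonian S f m p q = 0) (hqr : policyHamiltonian S f m q r = 0) :
    (q - r) ⬝ᵥ (f - (1 / 2 : K) • (S *ᵥ q)) = -(1 / 4) * ((q - p) ⬝ᵥ (S *ᵥ (q - p))) :=
  calc
    (q - r) ⬝ᵥ (f - (1 / 2 : K) • (S *ᵥ q))
      = policyHamiltonian S f m q q - policyHamiltonian S f m q r :=
        (policyHamiltonian_sub_right S f m q q r).symm
    _ = -(policyHamiltonian S f m p q - policyHamiltonian S f m q q) := by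
        rw [hpq, hqr, zero_sub, neg_neg, sub_zero]
    _ = -(1 / 4) * ((q - p) ⬝ᵥ (S *ᵥ (q - p))) := by
        rw [policyHamiltonian_sub_self hS, neg_mul]

end Hamiltonian

theorem stmt_4_general {ι K : Type*} [Fintype ι] [Field K] [LinearOrder K] [IsStrictOrderedRing K]
    [StarRing K] [TrivialStar K] (S : Matrix ι ι K) (hS : S.IsSymm) (f p q r : ι → K) (m : K)
    (hpq : q ⬝ᵥ (f - (1 / 2 : K) • (S *ᵥ p)) = -(1 / 4) * (p ⬝ᵥ (S *ᵥ p)) - m)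
    (hqr : r ⬝ᵥ (f - (1 / 2 : K) • (S *ᵥ q)) = -(1 / 4) * (q ⬝ᵥ (S *ᵥ q)) - m) :
    (q - r) ⬝ᵥ (f - (1 / 2 : K) • (S *ᵥ q)) =
      -(1 / 4) * ((q - p) ⬝ᵥ (S *ᵥ (q - p))) ∧
    (S.PosSemidef → (q - r) ⬝ᵥ (f - (1 / 2 : K) • (S *ᵥ q)) ≤ 0) := by
  have decrease_eq := sub_dotProduct_eq_of_policyHamiltonian_eq_zero hS
    (policyHamiltonian_eq_zero_iff.mpr hpq) (policyHamiltonian_eq_zero_iff.mpr hqr)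
  refine ⟨decrease_eq, fun hpos => ?_⟩
  have form_nonneg : 0 ≤ (q - p) ⬝ᵥ (S *ᵥ (q - p)) := by
    simpa only [star_trivial] using hpos.dotProduct_mulVec_nonneg (q - p)
  rw [decrease_eq]
  exact mul_nonpos_of_nonpos_of_nonneg (by norm_num) form_nonneg

/-- pointwise key monotonicity identity in the policy-iteration proof
(paper's Theorem 1). If `qᵀ(f − ½Sp) = −¼pᵀSp − m` and `rᵀ(f − ½Sq) = −¼qᵀSq − m`
for a symmetric positive semidefinite `S`, then
`(q − r)ᵀ(f − ½Sq) = −¼(q − p)ᵀS(q − p)`, and in particular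
`(q − r)ᵀ(f − ½Sq) ≤ 0`. -/
theorem stmt_4 {n : ℕ} (S : Matrix (Fin n) (Fin n) ℝ) (hS : S.PosSemidef)
    (f p q r : Fin n → ℝ) (m : ℝ)
    (h1 : q ⬝ᵥ (f - (1 / 2 : ℝ) • (S *ᵥ p)) = -(1 / 4) * (p ⬝ᵥ (S *ᵥ p)) - m)
    (h2 : r ⬝ᵥ (f - (1 / 2 : ℝ) • (S *ᵥ q)) = -(1 / 4) * (q ⬝ᵥ (S *ᵥ q)) - m) :
    (q - r) ⬝ᵥ (f - (1 / 2 : ℝ) • (S *ᵥ q)) =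
      -(1 / 4) * ((q - p) ⬝ᵥ (S *ᵥ (q - p))) ∧
    (q - r) ⬝ᵥ (f - (1 / 2 : ℝ) • (S *ᵥ q)) ≤ 0 := by
  have h := stmt_4_general S (isHermitian_iff_isSymm.mp hS.isHermitian) f p q r m h1 h2
  exact ⟨h.1, h.2 hS⟩
end

section
/- Let Ω ⊆ ℝⁿ be an open set, R a p×p real positive definite symmetric matrix, and let f : Ω × ℝ → ℝⁿ, g : Ω × ℝ → ℝ^{n×p}, m : Ω × ℝ → ℝ be continuously differentiable, and φ : Ω × ℝ → ℝ twice continuously differentiable. Suppose the steady-state Hamilton–Jacobi equation (∇ₓφ(x,α))ᵀ f(x,α) + m(x,α) − (1/4)(∇ₓφ(x,α))ᵀ g(x,α) R⁻¹ g(x,α)ᵀ ∇ₓφ(x,α) = 0 holds for all (x, α) ∈ Ω × ℝ. Then the function ξ(x,α) := ∂φ/∂α(x,α) satisfies, for all (x,α) ∈ Ω × ℝ, the linear first-order partial differential equation (∇ₓξ(x,α))ᵀ [f(x,α) − (1/2) g(x,α) R⁻¹ g(x,α)ᵀ ∇ₓφ(x,α)] = −(∂f/∂α(x,α))ᵀ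 ∇ₓφ(x,α) − ∂m/∂α(x,α) + (1/2)(∇ₓφ(x,α))ᵀ (∂g/∂α(x,α)) R⁻¹ g(x,α)ᵀ ∇ₓφ(x,α). -/
open Matrix

attribute [local instance] Matrix.normedAddCommGroup Matrix.normedSpace

/-!
Along a fixed state `x` the Hamilton–Jacobi expression is a function of the parameter `α` that
vanishes identically, hence so does its derivative. By symmetry of second derivatives the
derivative of `α ↦ ∇ₓφ(x, α)` is `∇ₓξ(x, α)`, and the two terms of the quadratic part that contain
`∇ₓξ` agree because the weight is symmetric; they turn the factor `1/4` into `1/2`.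
-/

open Filter Function Topology

section MixedPartialDerivatives

variable {𝕜 E₁ E₂ G : Type*} [NontriviallyNormedField 𝕜]
  [NormedAddCommGroup E₁] [NormedSpace 𝕜 E₁] [NormedAddCommGroup E₂] [NormedSpace 𝕜 E₂]
  [NormedAddCommGroup G] [NormedSpace 𝕜 G] {F : E₁ → E₂ → G} {x : E₁} {a : E₂}

theorem fderiv_left_eq_comp_inl (hF : DifferentiableAt 𝕜 (uncurry F) (x, a)) :
    fderiv 𝕜 (F · a) x = fderiv 𝕜 (uncurry F) (x, a) ∘L .inl 𝕜 E₁ E₂ :=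
  (hF.hasFDerivAt.comp (f := (·, a)) x (hasFDerivAt_prodMk_left x a)).fderiv

theorem fderiv_right_eq_comp_inr (hF : DifferentiableAt 𝕜 (uncurry F) (x, a)) :
    fderiv 𝕜 (F x) a = fderiv 𝕜 (uncurry F) (x, a) ∘L .inr 𝕜 E₁ E₂ :=
  (hF.hasFDerivAt.comp a (hasFDerivAt_prodMk_right x a)).fderiv

theorem eventually_differentiableAt_of_contDiffAt_one {f : E₁ → G} (hf : ContDiffAt 𝕜 1 f x) :
    ∀ᶠ y in 𝓝 x, DifferentiableAt 𝕜 f y :=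
  (hf.eventually (by simp)).mono fun _ hy => hy.differentiableAt one_ne_zero

theorem hasFDerivAt_fderiv_of_contDiffAt_two {f : E₁ → G} (hf : ContDiffAt 𝕜 2 f x) :
    HasFDerivAt (fderiv 𝕜 f) (fderiv 𝕜 (fderiv 𝕜 f) x) x :=
  ((hf.fderiv_right (m := 1) (by norm_num)).differentiableAt one_ne_zero).hasFDerivAt

theorem hasFDerivAt_fderiv_left (hF : ContDiffAt 𝕜 2 (uncurry F) (x, a)) :
    HasFDerivAt (fun b => fderiv 𝕜 (F · b) x)
      ((ContinuousLinearMap.inl 𝕜 E₁ E₂).precomp G ∘L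
        fderiv 𝕜 (fderiv 𝕜 (uncurry F)) (x, a) ∘L .inr 𝕜 E₁ E₂) a := by
  have h_eq : (fun b => fderiv 𝕜 (F · b) x) =ᶠ[𝓝 a]
      fun b => fderiv 𝕜 (uncurry F) (x, b) ∘L .inl 𝕜 E₁ E₂ :=
    ((Continuous.prodMk_right x).tendsto a).eventually
      (eventually_differentiableAt_of_contDiffAt_one (hF.of_le one_le_two)) |>.mono
        fun _ => fderiv_left_eq_comp_inl
  have h_slice := (hasFDerivAt_fderiv_of_contDiffAt_two hF).comp a (hasFDerivAt_prodMk_right x a)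
  have h_precomp := ((ContinuousLinearMap.inl 𝕜 E₁ E₂).precomp G).hasFDerivAt.comp a h_slice
  exact h_precomp.congr_of_eventuallyEq h_eq

theorem hasFDerivAt_fderiv_right (hF : ContDiffAt 𝕜 2 (uncurry F) (x, a)) :
    HasFDerivAt (fun y => fderiv 𝕜 (F y) a)
      ((ContinuousLinearMap.inr 𝕜 E₁ E₂).precomp G ∘L
        fderiv 𝕜 (fderiv 𝕜 (uncurry F)) (x, a) ∘L .inl 𝕜 E₁ E₂) x := by
  have h_eq : (fun y => fderiv 𝕜 (F y) a) =ᶠ[𝓝 x]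
      fun y => fderiv 𝕜 (uncurry F) (y, a) ∘L .inr 𝕜 E₁ E₂ :=
    ((Continuous.prodMk_left a).tendsto x).eventually
      (eventually_differentiableAt_of_contDiffAt_one (hF.of_le one_le_two)) |>.mono
        fun _ => fderiv_right_eq_comp_inr
  have h_slice := (hasFDerivAt_fderiv_of_contDiffAt_two hF).comp (f := (·, a)) x
    (hasFDerivAt_prodMk_left x a)
  have h_precomp := ((ContinuousLinearMap.inr 𝕜 E₁ E₂).precomp G).hasFDerivAt.comp x h_slice
  exact h_precomp.congr_of_eventuallyEq h_eq

theorem hasFDerivAt_fderiv_left_flip {n : WithTop ℕ∞}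
    (hF : ContDiffAt 𝕜 n (uncurry F) (x, a)) (hn : minSmoothness 𝕜 2 ≤ n) :
    HasFDerivAt (fun b => fderiv 𝕜 (F · b) x)
      (fderiv 𝕜 (fun y => fderiv 𝕜 (F y) a) x).flip a := by
  have hF₂ : ContDiffAt 𝕜 2 (uncurry F) (x, a) := hF.of_le (le_minSmoothness.trans hn)
  refine (hasFDerivAt_fderiv_left hF₂).congr_fderiv ?_
  ext w v
  rw [(hasFDerivAt_fderiv_right hF₂).fderiv]
  exact hF.isSymmSndFDerivAt hn (0, w) (v, 0)

theorem hasDerivAt_fderiv_left {F : E₁ → 𝕜 → G} {α : 𝕜} {n : WithTop ℕ∞}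
    (hF : ContDiffAt 𝕜 n (uncurry F) (x, α)) (hn : minSmoothness 𝕜 2 ≤ n) :
    HasDerivAt (fun β => fderiv 𝕜 (F · β) x) (fderiv 𝕜 (fun y => deriv (F y) α) x) α := by
  have h_diff : DifferentiableAt 𝕜 (fun y => fderiv 𝕜 (F y) α) x :=
    (hasFDerivAt_fderiv_right (hF.of_le (le_minSmoothness.trans hn))).differentiableAt
  refine (hasFDerivAt_fderiv_left_flip hF hn).hasDerivAt.congr_deriv ?_
  ext v
  simp only [← fderiv_apply_one_eq_deriv]
  rw [fderiv_clm_apply h_diff (differentiableAt_const (1 : 𝕜))]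
  simp

theorem hasDerivAt_gradient {ι : Type*} [Fintype ι] {φ : (ι → 𝕜) → 𝕜 → 𝕜} {x : ι → 𝕜} {α : 𝕜}
    {p : 𝕜 → ι → 𝕜} {q : ι → 𝕜} {n : WithTop ℕ∞}
    (hφ : ContDiffAt 𝕜 n (uncurry φ) (x, α)) (hn : minSmoothness 𝕜 2 ≤ n)
    (hp : ∀ᶠ β in 𝓝 α, ∀ v, fderiv 𝕜 (φ · β) x v = p β ⬝ᵥ v)
    (hq : ∀ v, fderiv 𝕜 (fun y => deriv (φ y) α) x v = q ⬝ᵥ v) :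
    HasDerivAt p q α := by
  classical
  refine hasDerivAt_pi.2 fun i => ?_
  have h_coord := (hasDerivAt_fderiv_left hφ hn).clm_apply
    (hasDerivAt_const α (Pi.single i 1 : ι → 𝕜))
  simp only [hq, dotProduct_single_one, map_zero, add_zero] at h_coord
  refine h_coord.congr_of_eventuallyEq (hp.mono fun β hβ => ?_)
  simp only [hβ, dotProduct_single_one]

end MixedPartialDerivatives

section ProductRules

variable {𝕜 E 𝔸 ι κ : Type*} [NontriviallyNormedField 𝕜] [NormedAddCommGroup E] [NormedSpace 𝕜 E]
  [NormedRing 𝔸] [NormedAlgebra 𝕜 𝔸] {α : 𝕜}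

theorem hasDerivAt_matrix_iff [Finite κ] {A : 𝕜 → Matrix ι κ E} {A' : Matrix ι κ E} :
    HasDerivAt A A' α ↔ ∀ i j, HasDerivAt (fun β => A β i j) (A' i j) α := by
  have := Fintype.ofFinite κ
  exact hasDerivAt_pi.trans <| forall_congr' fun _ => hasDerivAt_pi

theorem hasDerivAt_transpose [Finite ι] [Finite κ] {A : 𝕜 → Matrix ι κ E} {A' : Matrix ι κ E}
    (hA : HasDerivAt A A' α) : HasDerivAt (fun β => (A β)ᵀ) A'ᵀ α :=
  hasDerivAt_matrix_iff.2 fun j i => hasDerivAt_matrix_iff.1 hA i j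

theorem hasDerivAt_dotProduct [Fintype κ] {u v : 𝕜 → κ → 𝔸} {u' v' : κ → 𝔸}
    (hu : HasDerivAt u u' α) (hv : HasDerivAt v v' α) :
    HasDerivAt (fun β => u β ⬝ᵥ v β) (u' ⬝ᵥ v α + u α ⬝ᵥ v') α := by
  simp only [dotProduct, ← Finset.sum_add_distrib]
  exact .fun_sum fun i _ => (hasDerivAt_pi.1 hu i).mul (hasDerivAt_pi.1 hv i)

theorem hasDerivAt_mulVec [Fintype κ] {A : 𝕜 → Matrix ι κ 𝔸} {A' : Matrix ι κ 𝔸}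
    {v : 𝕜 → κ → 𝔸} {v' : κ → 𝔸} (hA : HasDerivAt A A' α) (hv : HasDerivAt v v' α) :
    HasDerivAt (fun β => A β *ᵥ v β) (A' *ᵥ v α + A α *ᵥ v') α :=
  hasDerivAt_pi.2 fun i => hasDerivAt_dotProduct (hasDerivAt_pi.1 hA i) hv

end ProductRules

section QuadraticForms

variable {K ι κ : Type*} [NonUnitalCommSemiring K] [Fintype ι] [Fintype κ]

theorem dotProduct_mulVec_comm_of_isSymm_s6 {S : Matrix κ κ K} (hS : S.IsSymm) (u v : κ → K) :
    u ⬝ᵥ S *ᵥ v = v ⬝ᵥ S *ᵥ u := by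
  rw [← dotProduct_transpose_mulVec, hS.eq]

theorem dotProduct_mul_mul_transpose_mulVec (A B : Matrix ι κ K) (S : Matrix κ κ K) (u v : ι → K) :
    u ⬝ᵥ (A * S * Bᵀ) *ᵥ v = (Aᵀ *ᵥ u) ⬝ᵥ S *ᵥ (Bᵀ *ᵥ v) := by
  rw [← mulVec_mulVec, ← mulVec_mulVec, dotProduct_mulVec, mulVec_transpose A]

theorem hasDerivAt_dotProduct_mulVec_self {𝕜 𝔸 : Type*} [NontriviallyNormedField 𝕜]
    [NormedCommRing 𝔸] [NormedAlgebra 𝕜 𝔸] {S : Matrix κ κ 𝔸} (hS : S.IsSymm) {w : 𝕜 → κ → 𝔸}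
    {w' : κ → 𝔸} {α : 𝕜} (hw : HasDerivAt w w' α) :
    HasDerivAt (fun β => w β ⬝ᵥ S *ᵥ w β) (2 * (w' ⬝ᵥ S *ᵥ w α)) α := by
  have h_mulVec : HasDerivAt (fun β => S *ᵥ w β) (S *ᵥ w') α := by
    simpa only [zero_mulVec, zero_add] using hasDerivAt_mulVec (hasDerivAt_const α S) hw
  refine (hasDerivAt_dotProduct hw h_mulVec).congr_deriv ?_
  rw [dotProduct_mulVec_comm_of_isSymm_s6 hS (w α), two_mul]

end QuadraticForms

section HamiltonJacobi

variable {ι κ : Type*} [Fintype ι] [Fintype κ]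

/-- The minimised Hamiltonian `pᵀf + m - ¼ pᵀ g S gᵀ p` at costate `p`, whose vanishing at
`p = ∇ₓφ` is the steady-state Hamilton–Jacobi equation. The matrix `S` stands for the inverse `R⁻¹`
of the control weight. -/
noncomputable def minimizedHamiltonian (S : Matrix κ κ ℝ) (f : ι → ℝ) (g : Matrix ι κ ℝ) (m : ℝ)
    (p : ι → ℝ) : ℝ :=
  p ⬝ᵥ f + m - (1 / 4) * (p ⬝ᵥ (g * S * gᵀ) *ᵥ p)

theorem hasDerivAt_minimizedHamiltonian {S : Matrix κ κ ℝ} (hS : S.IsSymm) {α : ℝ}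
    {f : ℝ → ι → ℝ} {f' : ι → ℝ} {g : ℝ → Matrix ι κ ℝ} {g' : Matrix ι κ ℝ} {m : ℝ → ℝ} {m' : ℝ}
    {p : ℝ → ι → ℝ} {p' : ι → ℝ} (hf : HasDerivAt f f' α) (hg : HasDerivAt g g' α)
    (hm : HasDerivAt m m' α) (hp : HasDerivAt p p' α) :
    HasDerivAt (fun β => minimizedHamiltonian S (f β) (g β) (m β) (p β))
      (p' ⬝ᵥ (f α - (1 / 2 : ℝ) • (g α * S * (g α)ᵀ) *ᵥ p α) + f' ⬝ᵥ p α + m'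
        - (1 / 2) * (p α ⬝ᵥ (g' * S * (g α)ᵀ) *ᵥ p α)) α := by
  have h_transpose : HasDerivAt (fun β => (g β)ᵀ) g'ᵀ α := hasDerivAt_transpose hg
  have h_control := hasDerivAt_mulVec h_transpose hp
  have h_quadratic := hasDerivAt_dotProduct_mulVec_self hS h_control
  simp only [minimizedHamiltonian, dotProduct_sub, dotProduct_smul, smul_eq_mul,
    dotProduct_mul_mul_transpose_mulVec]
  refine (((hasDerivAt_dotProduct hp hf).add hm).sub
    (h_quadratic.const_mul (1 / 4))).congr_deriv ?_
  rw [add_dotProduct, dotProduct_comm f']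
  ring

theorem stmt_6_general {U : Set ((ι → ℝ) × ℝ)} (hU : IsOpen U) {S : Matrix κ κ ℝ} (hS : S.IsSymm)
    {f fα gradφ gradξ : (ι → ℝ) → ℝ → ι → ℝ} {g gα : (ι → ℝ) → ℝ → Matrix ι κ ℝ}
    {m mα φ φα : (ι → ℝ) → ℝ → ℝ}
    (hφ : ContDiffOn ℝ 2 (uncurry φ) U)
    (hgradφ : ∀ x α, (x, α) ∈ U → ∀ v, fderiv ℝ (φ · α) x v = gradφ x α ⬝ᵥ v)
    (hφα : ∀ x α, (x, α) ∈ U → HasDerivAt (φ x) (φα x α) α)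
    (hgradξ : ∀ x α, (x, α) ∈ U → ∀ v, fderiv ℝ (φα · α) x v = gradξ x α ⬝ᵥ v)
    (hfα : ∀ x α, (x, α) ∈ U → HasDerivAt (f x) (fα x α) α)
    (hmα : ∀ x α, (x, α) ∈ U → HasDerivAt (m x) (mα x α) α)
    (hgα : ∀ x α, (x, α) ∈ U → HasDerivAt (g x) (gα x α) α)
    (hHJ : ∀ x α, (x, α) ∈ U →
      minimizedHamiltonian S (f x α) (g x α) (m x α) (gradφ x α) = 0)
    {x : ι → ℝ} {α : ℝ} (hx : (x, α) ∈ U) :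
    gradξ x α ⬝ᵥ (f x α - (1 / 2 : ℝ) • (g x α * S * (g x α)ᵀ) *ᵥ gradφ x α) =
      -(fα x α ⬝ᵥ gradφ x α) - mα x α
        + (1 / 2) * (gradφ x α ⬝ᵥ (gα x α * S * (g x α)ᵀ) *ᵥ gradφ x α) := by
  have h_param : ∀ᶠ β in 𝓝 α, (x, β) ∈ U :=
    (Continuous.prodMk_right x).continuousAt.eventually (hU.mem_nhds hx)
  have h_state : ∀ᶠ y in 𝓝 x, (y, α) ∈ U :=
    (Continuous.prodMk_left α).continuousAt.eventually (hU.mem_nhds hx)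
  have h_sensitivity : (fun y => deriv (φ y) α) =ᶠ[𝓝 x] (φα · α) :=
    h_state.mono fun y hy => (hφα y α hy).deriv
  have h_gradient : HasDerivAt (gradφ x) (gradξ x α) α :=
    hasDerivAt_gradient (hφ.contDiffAt (hU.mem_nhds hx)) (by simp)
      (h_param.mono fun β hβ => hgradφ x β hβ)
      fun v => by rw [h_sensitivity.fderiv_eq, hgradξ x α hx]
  have h_zero := (hasDerivAt_minimizedHamiltonian hS (hfα x α hx) (hgα x α hx) (hmα x α hx)
    h_gradient).unique
      ((hasDerivAt_const α (0 : ℝ)).congr_of_eventuallyEq (h_param.mono fun β hβ => hHJ x β hβ))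
  linarith

end HamiltonJacobi

/-- differentiating the parameterized steady-state Hamilton–Jacobi
equation with respect to the scalar parameter `α` (paper's equation (19)).
Here `gradφ x α = ∇ₓφ(x,α)`, `φα x α = ∂φ/∂α(x,α)` (the sensitivity `ξ`),
`gradξ x α = ∇ₓξ(x,α)`, `fα = ∂f/∂α`, `mα = ∂m/∂α`, `gα = ∂g/∂α`; these are tied
to `φ, f, m, g` by the derivative hypotheses below. If the Hamilton–Jacobi equation
`(∇ₓφ)ᵀf + m − ¼(∇ₓφ)ᵀgR⁻¹gᵀ∇ₓφ = 0` holds on `Ω × ℝ`, then `ξ = ∂φ/∂α` satisfies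
the linear first-order PDE
`(∇ₓξ)ᵀ[f − ½gR⁻¹gᵀ∇ₓφ] = −(∂f/∂α)ᵀ∇ₓφ − ∂m/∂α + ½(∇ₓφ)ᵀ(∂g/∂α)R⁻¹gᵀ∇ₓφ`. -/
theorem stmt_6 {n p : ℕ} (Ω : Set (Fin n → ℝ)) (hΩ : IsOpen Ω)
    (R : Matrix (Fin p) (Fin p) ℝ) (hR : R.PosDef) (hRsymm : Rᵀ = R)
    (f : (Fin n → ℝ) → ℝ → (Fin n → ℝ))
    (g : (Fin n → ℝ) → ℝ → Matrix (Fin n) (Fin p) ℝ)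
    (m : (Fin n → ℝ) → ℝ → ℝ)
    (φ : (Fin n → ℝ) → ℝ → ℝ)
    -- smoothness: f, g, m are C¹ and φ is C² jointly in (x, α) on Ω × ℝ
    (hf : ContDiffOn ℝ 1 (fun pr : (Fin n → ℝ) × ℝ => f pr.1 pr.2) (Ω ×ˢ Set.univ))
    (hg : ContDiffOn ℝ 1 (fun pr : (Fin n → ℝ) × ℝ => g pr.1 pr.2) (Ω ×ˢ Set.univ))
    (hm : ContDiffOn ℝ 1 (fun pr : (Fin n → ℝ) × ℝ => m pr.1 pr.2) (Ω ×ˢ Set.univ))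
    (hφ : ContDiffOn ℝ 2 (fun pr : (Fin n → ℝ) × ℝ => φ pr.1 pr.2) (Ω ×ˢ Set.univ))
    -- named derivatives
    (gradφ : (Fin n → ℝ) → ℝ → (Fin n → ℝ))
    (hgradφ : ∀ x ∈ Ω, ∀ α : ℝ, DifferentiableAt ℝ (fun y => φ y α) x ∧
      ∀ v, fderiv ℝ (fun y => φ y α) x v = gradφ x α ⬝ᵥ v)
    (φα : (Fin n → ℝ) → ℝ → ℝ)
    (hφα : ∀ x ∈ Ω, ∀ α : ℝ, HasDerivAt (fun β => φ x β) (φα x α) α)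
    (gradξ : (Fin n → ℝ) → ℝ → (Fin n → ℝ))
    (hgradξ : ∀ x ∈ Ω, ∀ α : ℝ, DifferentiableAt ℝ (fun y => φα y α) x ∧
      ∀ v, fderiv ℝ (fun y => φα y α) x v = gradξ x α ⬝ᵥ v)
    (fα : (Fin n → ℝ) → ℝ → (Fin n → ℝ))
    (hfα : ∀ x ∈ Ω, ∀ α : ℝ, HasDerivAt (fun β => f x β) (fα x α) α)
    (mα : (Fin n → ℝ) → ℝ → ℝ)
    (hmα : ∀ x ∈ Ω, ∀ α : ℝ, HasDerivAt (fun β => m x β) (mα x α) α)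
    (gα : (Fin n → ℝ) → ℝ → Matrix (Fin n) (Fin p) ℝ)
    (hgα : ∀ x ∈ Ω, ∀ α : ℝ, HasDerivAt (fun β => g x β) (gα x α) α)
    -- the parameterized Hamilton–Jacobi equation
    (hHJ : ∀ x ∈ Ω, ∀ α : ℝ,
      gradφ x α ⬝ᵥ f x α + m x α
        - (1 / 4) * (gradφ x α ⬝ᵥ ((g x α * R⁻¹ * (g x α)ᵀ) *ᵥ gradφ x α)) = 0) :
    ∀ x ∈ Ω, ∀ α : ℝ,
      gradξ x α ⬝ᵥ
          (f x α - (1 / 2 : ℝ) • ((g x α * R⁻¹ * (g x α)ᵀ) *ᵥ gradφ x α)) =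
        -(fα x α ⬝ᵥ gradφ x α) - mα x α
          + (1 / 2) * (gradφ x α ⬝ᵥ ((gα x α * R⁻¹ * (g x α)ᵀ) *ᵥ gradφ x α)) := by
  exact fun x hx α => stmt_6_general (hΩ.prod isOpen_univ) (IsSymm.inv hRsymm) hφ
    (fun y β hy => (hgradφ y hy.1 β).2) (fun y β hy => hφα y hy.1 β)
    (fun y β hy => (hgradξ y hy.1 β).2) (fun y β hy => hfα y hy.1 β) (fun y β hy => hmα y hy.1 β)
    (fun y β hy => hgα y hy.1 β) (fun y β hy => hHJ y hy.1 β) ⟨hx, trivial⟩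
end

section
/- Let S be an n×n real symmetric positive semidefinite matrix, f, p, q ∈ ℝⁿ vectors, and m > 0 a real number. If qᵀ(f − (1/2)·S·p) = −(1/4)·pᵀSp − m, then qᵀ(f − (1/2)·S·q) = −(1/4)·(p − q)ᵀS(p − q) − (1/4)·qᵀSq − m < 0; in particular q ≠ 0 implies that the closed-loop vector field value f − (1/2)·S·q makes a strictly negative inner product with q. -/
open Matrix

section BilinForm

open LinearMap (BilinForm)

theorem bilinForm_sub_self_of_isSymm {R V : Type*} [CommRing R] [AddCommGroup V] [Module R V]
    {B : BilinForm R V} (hB : B.IsSymm) (p q : V) :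
    B (p - q) (p - q) = B p p - 2 * B p q + B q q := by
  simp only [map_sub, LinearMap.sub_apply, hB.eq q p]
  ring

theorem sub_half_smul_apply_self_of_isSymm {K V : Type*} [Field K] [NeZero (2 : K)]
    [AddCommGroup V] [Module K V] {B : BilinForm K V} (hB : B.IsSymm)
    (f : Module.Dual K V) (p q : V) :
    (f - (1 / 2 : K) • B q) q =
      (f - (1 / 2 : K) • B p) q + (1 / 4) * B p p
        - (1 / 4) * B (p - q) (p - q) - (1 / 4) * B q q := by
  have four_eq : (4 : K) = 2 * 2 := by norm_num
  simp only [LinearMap.sub_apply, LinearMap.smul_apply, smul_eq_mul,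
    bilinForm_sub_self_of_isSymm hB, four_eq]
  field_simp
  ring

/-- Gradients are vectors of `V` and velocities are covectors, so that `B p : Module.Dual K V` plays
the role of `S *ᵥ p` and evaluation at `q` that of the dot product with `q`. -/
theorem stmt_13_general {K V : Type*} [Field K] [LinearOrder K] [IsStrictOrderedRing K]
    [AddCommGroup V] [Module K V] {B : BilinForm K V} (hB : B.IsPosSemidef)
    (f : Module.Dual K V) (p q : V) {m : K} (hm : 0 < m)
    (h : (f - (1 / 2 : K) • B p) q = -(1 / 4) * B p p - m) :
    (f - (1 / 2 : K) • B q) q = -(1 / 4) * B (p - q) (p - q) - (1 / 4) * B q q - m ∧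
      (f - (1 / 2 : K) • B q) q < 0 := by
  have decrease_eq :
      (f - (1 / 2 : K) • B q) q = -(1 / 4) * B (p - q) (p - q) - (1 / 4) * B q q - m := by
    rw [sub_half_smul_apply_self_of_isSymm hB.isSymm f p q, h]
    ring
  have form_sub_nonneg : 0 ≤ B (p - q) (p - q) := hB.isNonneg.nonneg (p - q)
  have form_self_nonneg : 0 ≤ B q q := hB.isNonneg.nonneg q
  exact ⟨decrease_eq, by linarith⟩

end BilinForm

section Matrix

variable {R ι : Type*} [CommRing R] [Fintype ι] [DecidableEq ι] {S : Matrix ι ι R}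

theorem isPosSemidef_toBilin'_of_posSemidef [PartialOrder R] [StarRing R] [TrivialStar R]
    (hS : S.PosSemidef) : (toBilin' S).IsPosSemidef where
  isSymm := isSymm_toBilin'_iff_isSymm.mpr (isHermitian_iff_isSymm.mp hS.isHermitian)
  isNonneg := ⟨fun x ↦ by
    simpa only [toBilin'_apply', star_trivial] using hS.dotProduct_mulVec_nonneg x⟩

theorem dotProductEquiv_sub_smul_toBilin'_apply (hS : (toBilin' S).IsSymm) (f p q : ι → R)
    (c : R) :
    (dotProductEquiv R ι f - c • toBilin' S p) q = q ⬝ᵥ (f - c • (S *ᵥ p)) := by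
  rw [LinearMap.sub_apply, LinearMap.smul_apply, dotProductEquiv_apply_apply, hS.eq,
    toBilin'_apply', dotProduct_sub, dotProduct_smul, dotProduct_comm f]

end Matrix

/-- strict Lyapunov-decrease consequence in the proof of the paper's
Theorem 1. If `m > 0` and `qᵀ(f − ½Sp) = −¼pᵀSp − m` for a symmetric positive
semidefinite `S`, then
`qᵀ(f − ½Sq) = −¼(p−q)ᵀS(p−q) − ¼qᵀSq − m < 0`: the closed-loop vector field value
`f − ½Sq` makes a strictly negative inner product with `q`. -/
theorem stmt_13 {n : ℕ} (S : Matrix (Fin n) (Fin n) ℝ) (hS : S.PosSemidef)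
    (f p q : Fin n → ℝ) (m : ℝ) (hm : 0 < m)
    (h : q ⬝ᵥ (f - (1 / 2 : ℝ) • (S *ᵥ p)) = -(1 / 4) * (p ⬝ᵥ (S *ᵥ p)) - m) :
    q ⬝ᵥ (f - (1 / 2 : ℝ) • (S *ᵥ q)) =
      -(1 / 4) * ((p - q) ⬝ᵥ (S *ᵥ (p - q))) - (1 / 4) * (q ⬝ᵥ (S *ᵥ q)) - m ∧
    q ⬝ᵥ (f - (1 / 2 : ℝ) • (S *ᵥ q)) < 0 := by
  have hB := isPosSemidef_toBilin'_of_posSemidef hS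
  simp only [← dotProductEquiv_sub_smul_toBilin'_apply hB.isSymm, ← toBilin'_apply'] at h ⊢
  exact stmt_13_general hB _ p q hm h
end
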